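/- With G_n and LD_n as above, let pa(G) denote the number of path components of G and cyc_i(G) the number of cycle components lying in layer V_i. Then Σ_{G ∈ LD_n} x^{pa(G)} Π_{i=1}^r (α_i+1)^{cyc_i(G)} = ℒ_n^{(α)}(x), where ℒ_n^{(α)}(x) := (-1)^{|n|} L_n^{(α)}(-x) = Σ_{k_1,...,k_r} (Π_i C(n_i,k_i)(α_i+1+k_1+···+k_i)^{rising(n_i-k_i)}) x^{|k|}. -/

import Mathlib

namespace LD

variable {V : Type*} [Fintype V] [DecidableEq V]

/-- A Laguerre digraph: each vertex has out-degree ≤ 1 and in-degree ≤ 1. -/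
def IsLaguerre (E : Finset (V × V)) : Prop :=
  (∀ a b c : V, (a, b) ∈ E → (a, c) ∈ E → b = c) ∧
  (∀ a b c : V, (a, c) ∈ E → (b, c) ∈ E → a = b)

instance : DecidablePred (IsLaguerre (V := V)) := fun _ => by
  unfold IsLaguerre; infer_instance

/-- The underlying (symmetrized) adjacency relation of an edge set. -/
def Adj (E : Finset (V × V)) (a b : V) : Prop := (a, b) ∈ E ∨ (b, a) ∈ E

/-- The weakly connected component of a vertex `v`. -/
def Component (E : Finset (V × V)) (v : V) : Set V :=
  {w | Relation.ReflTransGen (Adj E) v w}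

/-- `S` is the vertex set of a directed cycle of the Laguerre digraph `E`:
it is nonempty, every vertex of `S` has a successor in `S`, and it is minimal
with these properties. -/
def IsCycleSet (E : Finset (V × V)) (S : Set V) : Prop :=
  S.Nonempty ∧ (∀ v ∈ S, ∃ w ∈ S, (v, w) ∈ E) ∧
  ∀ T ⊆ S, T.Nonempty → (∀ v ∈ T, ∃ w ∈ T, (v, w) ∈ E) → T = S

/-- The number of cycle components. -/
noncomputable def cyc (E : Finset (V × V)) : ℕ :=
  Set.ncard {S : Set V | IsCycleSet E S}

/-- The number of path components: weakly connected components containing a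
vertex with no outgoing edge. -/
noncomputable def pa (E : Finset (V × V)) : ℕ :=
  Set.ncard {C : Set V | (∃ v, C = Component E v) ∧ ∃ v ∈ C, ∀ w, (v, w) ∉ E}

end LD

open Finset

/-!
Fix the set `S` of sources of a layered Laguerre digraph: there are as many path components as
sources, and every other vertex receives exactly one edge. Choose these edges in increasing order of
layer. When the vertex `a` is reached, every edge chosen so far stays within the layers up to that
of `a`, so the sinks in these layers are as numerous as the sources there. Each of these sinks may
be joined to `a`; exactly one of them ends the path starting at `a`, and only that choice closes a
cycle, which then lies in the layer of `a`. Hence `a` contributes the weight of a cycle in its layer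
plus the number of other sources in the layers up to its own, and multiplying over the vertices
outside `S` gives the rising factorials.
-/

namespace LD

section Structure

variable {V : Type*} {E : Finset (V × V)} {S : Set V} {a u v w : V}

/-- Reachability along directed edges, by a directed walk that may have length zero. -/
def Reach (E : Finset (V × V)) : V → V → Prop :=
  Relation.ReflTransGen fun v w => (v, w) ∈ E

/-- A sink is a vertex without outgoing edge; in a Laguerre digraph, the end of a path component. -/
abbrev IsSink (E : Finset (V × V)) (u : V) : Prop := ∀ w, (u, w) ∉ E

/-- A source is a vertex without incoming edge; in a Laguerre digraph, the start of a path
component. -/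
abbrev IsSource (E : Finset (V × V)) (a : V) : Prop := ∀ w, (w, a) ∉ E

theorem IsSink.eq_of_reach (hu : IsSink E u) (h : Reach E u v) : u = v := by
  rcases h.cases_head with huv | ⟨w, huw, -⟩
  · exact huv
  · exact absurd huw (hu w)

theorem IsLaguerre.mono {E' : Finset (V × V)} (hE : IsLaguerre E) (h : E' ⊆ E) : IsLaguerre E' :=
  ⟨fun a b c hb hc => hE.1 a b c (h hb) (h hc), fun a b c ha hb => hE.2 a b c (h ha) (h hb)⟩

theorem IsLaguerre.sink_unique (hE : IsLaguerre E) (hu : IsSink E u) (hv : IsSink E v)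
    (hau : Reach E a u) (hav : Reach E a v) : u = v :=
  (Relation.ReflTransGen.total_of_right_unique hE.1 hau hav).elim hu.eq_of_reach
    fun h => (hv.eq_of_reach h).symm

theorem IsLaguerre.exists_pred_mem (hE : IsLaguerre E)
    (hS : ∀ v ∈ S, ∃ w ∈ S, (v, w) ∈ E) (hv : v ∈ S) : ∃ w ∈ S, (w, v) ∈ E := by
  have hfin : S.Finite := (E.finite_toSet.image Prod.fst).subset fun v hv =>
    let ⟨w, _, hvw⟩ := hS v hv
    ⟨(v, w), hvw, rfl⟩
  choose! next hnext hedge using hS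
  have hinj : Set.InjOn next S := fun s hs t ht hst =>
    hE.2 s t (next t) (hst ▸ hedge s hs) (hedge t ht)
  obtain ⟨w, hw, rfl⟩ := ((hfin.injOn_iff_bijOn_of_mapsTo hnext).mp hinj).surjOn hv
  exact ⟨w, hw, hedge w hw⟩

theorem IsLaguerre.exists_sink_of_isSource (hE : IsLaguerre E) (ha : IsSource E a) :
    ∃ u, IsSink E u ∧ Reach E a u := by
  by_contra! hno
  have hsucc : ∀ v ∈ {v | Reach E a v}, ∃ w ∈ {v | Reach E a v}, (v, w) ∈ E := by
    intro v hv
    obtain ⟨w, hvw⟩ := not_forall_not.mp fun hsink => hno v hsink hv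
    exact ⟨w, hv.tail hvw, hvw⟩
  obtain ⟨w, -, hwa⟩ := hE.exists_pred_mem hsucc Relation.ReflTransGen.refl
  exact ha w hwa

theorem IsLaguerre.mem_of_reach (hE : IsLaguerre E) (hS : ∀ v ∈ S, ∃ w ∈ S, (v, w) ∈ E)
    (hv : v ∈ S) (h : Reach E v w) : w ∈ S := by
  induction h with
  | refl => exact hv
  | tail _ hxy ih =>
    obtain ⟨z, hz, hxz⟩ := hS _ ih
    rwa [hE.1 _ _ _ hxy hxz]

theorem IsCycleSet.eq_setOf_reach (hE : IsLaguerre E) (hS : IsCycleSet E S) (ha : a ∈ S) :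
    S = {v | Reach E a v} := by
  have hsub : {v | Reach E a v} ⊆ S := fun v hv => hE.mem_of_reach hS.2.1 ha hv
  refine (hS.2.2 _ hsub ⟨a, Relation.ReflTransGen.refl⟩ fun v hv => ?_).symm
  obtain ⟨w, -, hvw⟩ := hS.2.1 v (hsub hv)
  exact ⟨w, Relation.ReflTransGen.tail hv hvw, hvw⟩

theorem IsCycleSet.notMem_of_isSink (hS : IsCycleSet E S) (hu : IsSink E u) : u ∉ S := fun huS =>
  let ⟨w, _, huw⟩ := hS.2.1 u huS
  hu w huw

theorem IsLaguerre.reach_of_reach_of_edge (hE : IsLaguerre E) (hua : (u, a) ∈ E)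
    (hau : Reach E a u) (hav : Reach E a v) : Reach E v u := by
  induction hav with
  | refl => exact hau
  | tail _ hvw ih =>
    rcases ih.cases_head with rfl | ⟨z, hvz, hzu⟩
    · rwa [hE.1 _ _ _ hvw hua]
    · rwa [hE.1 _ _ _ hvw hvz]

theorem IsLaguerre.isCycleSet_setOf_reach (hE : IsLaguerre E) (hua : (u, a) ∈ E)
    (hau : Reach E a u) : IsCycleSet E {v | Reach E a v} := by
  refine ⟨⟨a, Relation.ReflTransGen.refl⟩, fun v hav => ?_, fun T hT ⟨t, ht⟩ hclosed => ?_⟩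
  · rcases (hE.reach_of_reach_of_edge hua hau hav).cases_head with rfl | ⟨w, hvw, -⟩
    · exact ⟨a, Relation.ReflTransGen.refl, hua⟩
    · exact ⟨w, hav.tail hvw, hvw⟩
  · have hta : Reach E t a := (hE.reach_of_reach_of_edge hua hau (hT ht)).tail hua
    exact hT.antisymm fun v hav => hE.mem_of_reach hclosed ht (hta.trans hav)

theorem IsLaguerre.reach_of_mem_component (hE : IsLaguerre E) (hv : IsSink E v)
    (h : w ∈ Component E v) : Reach E w v := by
  induction h with
  | refl => exact Relation.ReflTransGen.refl
  | tail _ hxy ih =>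
    rcases hxy with hxy | hyx
    · rcases ih.cases_head with rfl | ⟨z, hxz, hzv⟩
      · exact absurd hxy (hv _)
      · rwa [hE.1 _ _ _ hxy hxz]
    · exact ih.head hyx

theorem component_eq_of_mem (h : w ∈ Component E v) : Component E w = Component E v := by
  have : Std.Symm (Adj E) := ⟨fun _ _ => Or.symm⟩
  have hwv : Relation.ReflTransGen (Adj E) w v := Relation.ReflTransGen.stdSymm.symm v w h
  exact Set.ext fun _ => ⟨h.trans, hwv.trans⟩

theorem IsLaguerre.pa_eq_ncard_isSink (hE : IsLaguerre E) :
    pa E = Set.ncard {u | IsSink E u} := by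
  have himage : {C : Set V | (∃ v, C = Component E v) ∧ ∃ v ∈ C, IsSink E v} =
      Component E '' {u | IsSink E u} := by
    ext C
    constructor
    · rintro ⟨⟨v, rfl⟩, u, huv, hu⟩
      exact ⟨u, hu, component_eq_of_mem huv⟩
    · rintro ⟨u, hu, rfl⟩
      exact ⟨⟨u, rfl⟩, u, Relation.ReflTransGen.refl, hu⟩
  rw [pa, himage, Set.InjOn.ncard_image]
  intro u hu v hv huv
  have hv_mem : v ∈ Component E u := huv ▸ Relation.ReflTransGen.refl
  exact (hv.eq_of_reach (hE.reach_of_mem_component hu hv_mem)).symm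

end Structure

section InsertEdge

variable {V : Type*} [DecidableEq V] {E : Finset (V × V)} {S : Set V} {a u v : V}

theorem IsLaguerre.insert_edge (hE : IsLaguerre E) (hu : IsSink E u) (ha : IsSource E a) :
    IsLaguerre (insert (u, a) E) := by
  simp only [IsLaguerre, mem_insert, Prod.mk.injEq]
  constructor
  · rintro x y z (⟨rfl, rfl⟩ | hxy) (⟨hx, rfl⟩ | hxz)
    · rfl
    · exact absurd hxz (hu z)
    · exact absurd (hx ▸ hxy) (hu y)
    · exact hE.1 x y z hxy hxz
  · rintro x y z (⟨rfl, rfl⟩ | hxz) (⟨rfl, hz⟩ | hyz)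
    · rfl
    · exact absurd hyz (ha y)
    · exact absurd (hz ▸ hxz) (ha x)
    · exact hE.2 x y z hxz hyz

theorem isSource_insert : IsSource (insert (u, a) E) v ↔ IsSource E v ∧ v ≠ a := by
  simp only [IsSource, mem_insert, Prod.mk.injEq, not_or, not_and, forall_and, forall_eq]
  exact and_comm

theorem IsLaguerre.isSink_erase (hE : IsLaguerre E) (hua : (u, a) ∈ E) :
    IsSink (E.erase (u, a)) u := by
  intro w huw
  obtain ⟨hne, huw⟩ := mem_erase.mp huw
  exact hne (by rw [hE.1 u w a huw hua])

theorem IsLaguerre.isSource_erase (hE : IsLaguerre E) (hua : (u, a) ∈ E) :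
    IsSource (E.erase (u, a)) v ↔ IsSource E v ∨ v = a := by
  constructor
  · intro hv
    refine or_iff_not_imp_right.mpr fun hva w hwv => hv w ?_
    exact mem_erase.mpr ⟨fun h => hva (Prod.mk.inj h).2, hwv⟩
  · rintro (hv | rfl) w hwv
    · exact hv w (mem_of_mem_erase hwv)
    · obtain ⟨hne, hwv⟩ := mem_erase.mp hwv
      exact hne (by rw [hE.2 w u v hwv hua])

/-- A walk from `a` through the edge `(u, a)` is back at its starting point. -/
theorem reach_insert : Reach (insert (u, a) E) a v ↔ Reach E a v := by
  refine ⟨fun h => ?_, Relation.ReflTransGen.mono (fun _ _ => mem_insert_of_mem) a v⟩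
  induction h with
  | refl => exact Relation.ReflTransGen.refl
  | tail _ hxy ih =>
    rcases mem_insert.mp hxy with hxy | hxy
    · obtain ⟨rfl, rfl⟩ := Prod.mk.inj hxy
      exact Relation.ReflTransGen.refl
    · exact ih.tail hxy

theorem isCycleSet_insert_of_notMem (hu : u ∉ S) :
    IsCycleSet (insert (u, a) E) S ↔ IsCycleSet E S := by
  have hedge : ∀ T ⊆ S, (∀ v ∈ T, ∃ w ∈ T, (v, w) ∈ insert (u, a) E) ↔
      ∀ v ∈ T, ∃ w ∈ T, (v, w) ∈ E := by
    intro T hT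
    refine forall₂_congr fun v hv => ?_
    have hvu : v ≠ u := ne_of_mem_of_not_mem (hT hv) hu
    simp only [mem_insert, Prod.mk.injEq, hvu, false_and, false_or]
  rw [IsCycleSet, hedge S subset_rfl]
  refine and_congr_right fun _ => and_congr_right fun _ => forall₂_congr fun T hT => ?_
  rw [hedge T hT]

theorem IsLaguerre.isCycleSet_insert (hE : IsLaguerre E) (hu : IsSink E u) (ha : IsSource E a) :
    IsCycleSet (insert (u, a) E) S ↔
      IsCycleSet E S ∨ Reach E a u ∧ S = {v | Reach E a v} := by
  have hE' := hE.insert_edge hu ha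
  by_cases huS : u ∈ S
  · rw [or_iff_right fun hS => hS.notMem_of_isSink hu huS]
    constructor
    · intro hS
      obtain ⟨w, hwS, huw⟩ := hS.2.1 u huS
      obtain rfl := hE'.1 u w a huw (mem_insert_self _ _)
      have hSw : S = {v | Reach E w v} := by
        simpa only [reach_insert] using hS.eq_setOf_reach hE' hwS
      exact ⟨hSw.subset huS, hSw⟩
    · rintro ⟨hau, rfl⟩
      simpa only [reach_insert] using
        hE'.isCycleSet_setOf_reach (mem_insert_self _ _) (reach_insert.mpr hau)
  · rw [isCycleSet_insert_of_notMem huS, or_iff_left]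
    rintro ⟨hau, rfl⟩
    exact huS hau

end InsertEdge

theorem prod_eq_mul_prod_of_forall_ne {ι R : Type*} [Fintype ι] [CommMonoid R]
    {f g : ι → R} {i : ι} {b : R} (hi : f i = b * g i) (hne : ∀ j ≠ i, f j = g j) :
    ∏ j, f j = b * ∏ j, g j := by
  classical
  rw [← mul_prod_erase univ f (mem_univ i), ← mul_prod_erase univ g (mem_univ i), hi, mul_assoc,
    prod_congr rfl fun j hj => hne j (ne_of_mem_erase hj)]

section CycleWeight

variable {V ι R : Type*} [CommMonoid R] {E : Finset (V × V)} {ℓ : V → ι} {a u v : V}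

theorem layer_le_of_reach [Preorder ι] (hℓ : ∀ e ∈ E, ℓ e.1 ≤ ℓ e.2) (h : Reach E v u) :
    ℓ v ≤ ℓ u := by
  induction h with
  | refl => exact le_rfl
  | tail _ hxy ih => exact ih.trans (hℓ _ hxy)

theorem layer_eq_of_reach [PartialOrder ι] (hℓ : ∀ e ∈ E, ℓ e.1 ≤ ℓ e.2)
    (ha : ∀ e ∈ E, ℓ e.2 ≤ ℓ a) (h : Reach E a v) : ℓ v = ℓ a := by
  refine le_antisymm ?_ (layer_le_of_reach hℓ h)
  rcases h.cases_tail with rfl | ⟨w, -, hwv⟩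
  · exact le_rfl
  · exact ha _ hwv

/-- The cycles lying in layer `i`, as vertex sets. -/
def layerCycles (ℓ : V → ι) (E : Finset (V × V)) (i : ι) : Set (Set V) :=
  {S | IsCycleSet E S ∧ ∀ v ∈ S, ℓ v = i}

/-- The weight of the cycles of a layered digraph: a factor `c i` for each cycle in layer `i`. -/
noncomputable def cycleWeight [Fintype ι] (ℓ : V → ι) (c : ι → R) (E : Finset (V × V)) : R :=
  ∏ i, c i ^ (layerCycles ℓ E i).ncard

theorem cycleWeight_empty [Fintype ι] (c : ι → R) :
    cycleWeight ℓ c (∅ : Finset (V × V)) = 1 := by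
  refine prod_eq_one fun i _ => ?_
  have hcycles : layerCycles ℓ (∅ : Finset (V × V)) i = ∅ := by
    refine Set.eq_empty_of_forall_notMem ?_
    rintro S ⟨hS, -⟩
    obtain ⟨v, hv⟩ := hS.1
    exact hS.notMem_of_isSink (fun w => notMem_empty (v, w)) hv
  rw [hcycles, Set.ncard_empty, pow_zero]

theorem IsLaguerre.cycleWeight_insert_of_not_reach [Fintype ι] [DecidableEq V] (c : ι → R)
    (hE : IsLaguerre E) (hu : IsSink E u) (ha : IsSource E a) (hau : ¬ Reach E a u) :
    cycleWeight ℓ c (insert (u, a) E) = cycleWeight ℓ c E := by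
  simp only [cycleWeight, layerCycles, hE.isCycleSet_insert hu ha, hau, false_and, or_false]

theorem IsLaguerre.cycleWeight_insert_of_reach [Fintype ι] [Finite V] [DecidableEq V] (c : ι → R)
    (hE : IsLaguerre E) (hu : IsSink E u) (ha : IsSource E a) (hau : Reach E a u)
    (hlayer : ∀ v, Reach E a v → ℓ v = ℓ a) :
    cycleWeight ℓ c (insert (u, a) E) = c (ℓ a) * cycleWeight ℓ c E := by
  have hcycles (i : ι) : layerCycles ℓ (insert (u, a) E) i =
      layerCycles ℓ E i ∪ {S | S = {v | Reach E a v} ∧ ℓ a = i} := by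
    ext S
    simp only [layerCycles, hE.isCycleSet_insert hu ha, hau, true_and, Set.mem_ofPred_eq,
      Set.mem_union, or_and_right]
    refine or_congr_right (and_congr_right ?_)
    rintro rfl
    exact ⟨fun h => h a Relation.ReflTransGen.refl, fun h v hav => (hlayer v hav).trans h⟩
  refine prod_eq_mul_prod_of_forall_ne (i := ℓ a) ?_ fun i hi => ?_
  · have hnew : {v | Reach E a v} ∉ layerCycles ℓ E (ℓ a) := fun h =>
      h.1.notMem_of_isSink hu hau
    simp only [hcycles, and_true, Set.ofPred_eq_eq_singleton, Set.union_singleton]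
    rw [Set.ncard_insert_of_notMem hnew, pow_succ']
  · simp only [hcycles, hi.symm, and_false, Set.ofPred_false, Set.union_empty]

end CycleWeight

section Layered

variable {V ι : Type*} [Fintype V] [DecidableEq V] [LinearOrder ι] {E : Finset (V × V)}
  {ℓ : V → ι} {S : Finset V} {a u : V}

theorem IsLaguerre.card_filter_isSink (hE : IsLaguerre E) {L : Finset V} (hL : E ⊆ L ×ˢ L) :
    #{u ∈ L | IsSink E u} = #{a ∈ L | IsSource E a} := by
  have hsink : {u ∈ L | IsSink E u} = L \ E.image Prod.fst := by ext; simp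
  have hsource : {a ∈ L | IsSource E a} = L \ E.image Prod.snd := by ext; simp
  have htail : E.image Prod.fst ⊆ L :=
    image_subset_iff.mpr fun e he => (mem_product.mp (hL he)).1
  have hhead : E.image Prod.snd ⊆ L :=
    image_subset_iff.mpr fun e he => (mem_product.mp (hL he)).2
  have hfst : Set.InjOn Prod.fst (E : Set (V × V)) := fun ⟨x, y⟩ hxy ⟨_, z⟩ hxz h => by
    obtain rfl : x = _ := h
    rw [hE.1 x y z hxy hxz]
  have hsnd : Set.InjOn Prod.snd (E : Set (V × V)) := fun ⟨x, z⟩ hxz ⟨y, _⟩ hyz h => by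
    obtain rfl : z = _ := h
    rw [hE.2 x y z hxz hyz]
  rw [hsink, hsource, card_sdiff_of_subset htail, card_sdiff_of_subset hhead,
    card_image_of_injOn hfst, card_image_of_injOn hsnd]

theorem IsLaguerre.pa_eq_card_isSource (hE : IsLaguerre E) : pa E = #{a | IsSource E a} := by
  rw [← hE.card_filter_isSink fun e _ => mem_product.mpr ⟨mem_univ e.1, mem_univ e.2⟩,
    ← Set.ncard_coe_finset, coe_filter_univ, hE.pa_eq_ncard_isSink]

/-- The Laguerre digraphs whose edges weakly increase the layer `ℓ` and whose set of sources
is `S`. -/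
def layeredWithSources (ℓ : V → ι) (S : Finset V) : Finset (Finset (V × V)) :=
  {E | IsLaguerre E ∧ (∀ e ∈ E, ℓ e.1 ≤ ℓ e.2) ∧ ∀ v, IsSource E v ↔ v ∈ S}

theorem mem_layeredWithSources : E ∈ layeredWithSources ℓ S ↔
    IsLaguerre E ∧ (∀ e ∈ E, ℓ e.1 ≤ ℓ e.2) ∧ ∀ v, IsSource E v ↔ v ∈ S :=
  mem_filter_univ E

theorem layeredWithSources_univ : layeredWithSources ℓ univ = {∅} := by
  ext E
  rw [mem_layeredWithSources, mem_singleton]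
  constructor
  · rintro ⟨-, -, hsource⟩
    exact eq_empty_of_forall_notMem fun e he => (hsource e.2).mpr (mem_univ _) e.1 he
  · rintro rfl
    simp [IsLaguerre, IsSource]

/-- The sinks in the layers up to `i`. -/
def sinksUpTo (ℓ : V → ι) (E : Finset (V × V)) (i : ι) : Finset V := {u | ℓ u ≤ i ∧ IsSink E u}

theorem mem_sinksUpTo {i : ι} : u ∈ sinksUpTo ℓ E i ↔ ℓ u ≤ i ∧ IsSink E u :=
  mem_filter_univ u

theorem layer_snd_le (hE : E ∈ layeredWithSources ℓ S) (hS : ∀ v ∉ S, ℓ v ≤ ℓ a)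
    {e : V × V} (he : e ∈ E) : ℓ e.2 ≤ ℓ a :=
  hS e.2 fun heS => ((mem_layeredWithSources.mp hE).2.2 e.2).mpr heS e.1 he

theorem card_sinksUpTo (hE : E ∈ layeredWithSources ℓ S) (hS : ∀ v ∉ S, ℓ v ≤ ℓ a) :
    #(sinksUpTo ℓ E (ℓ a)) = #{v ∈ S | ℓ v ≤ ℓ a} := by
  obtain ⟨hlag, hℓ, hsource⟩ := mem_layeredWithSources.mp hE
  have hends : E ⊆ (univ.filter fun v => ℓ v ≤ ℓ a) ×ˢ (univ.filter fun v => ℓ v ≤ ℓ a) := by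
    intro e he
    have hsnd := layer_snd_le hE hS he
    simpa only [mem_product, mem_filter_univ] using ⟨(hℓ e he).trans hsnd, hsnd⟩
  rw [sinksUpTo, ← filter_filter, hlag.card_filter_isSink hends, filter_filter]
  congr 1
  ext v
  simp only [mem_filter, mem_univ, true_and, hsource, and_comm]

theorem insert_mem_layeredWithSources (hE : E ∈ layeredWithSources ℓ S) (ha : a ∈ S)
    (hua : ℓ u ≤ ℓ a) (hu : IsSink E u) :
    insert (u, a) E ∈ layeredWithSources ℓ (S.erase a) := by
  obtain ⟨hlag, hℓ, hsource⟩ := mem_layeredWithSources.mp hE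
  refine mem_layeredWithSources.mpr ⟨hlag.insert_edge hu ((hsource a).mpr ha), ?_, fun v => ?_⟩
  · exact (forall_mem_insert _ _ _).mpr ⟨hua, hℓ⟩
  · rw [isSource_insert, hsource, mem_erase, and_comm]

theorem erase_mem_layeredWithSources (hE : E ∈ layeredWithSources ℓ (S.erase a)) (ha : a ∈ S)
    (hua : (u, a) ∈ E) : E.erase (u, a) ∈ layeredWithSources ℓ S := by
  obtain ⟨hlag, hℓ, hsource⟩ := mem_layeredWithSources.mp hE
  refine mem_layeredWithSources.mpr ⟨hlag.mono (erase_subset _ _), ?_, fun v => ?_⟩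
  · exact fun e he => hℓ e (mem_of_mem_erase he)
  · rw [hlag.isSource_erase hua, hsource, mem_erase]
    by_cases hva : v = a <;> simp [hva, ha]

theorem sum_layeredWithSources_erase {M : Type*} [AddCommMonoid M] (f : Finset (V × V) → M)
    (ha : a ∈ S) :
    ∑ E ∈ layeredWithSources ℓ (S.erase a), f E =
      ∑ E ∈ layeredWithSources ℓ S, ∑ u ∈ sinksUpTo ℓ E (ℓ a), f (insert (u, a) E) := by
  have hnot {E} (hE : E ∈ layeredWithSources ℓ S) : ∀ w, (w, a) ∉ E :=
    ((mem_layeredWithSources.mp hE).2.2 a).mpr ha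
  rw [sum_sigma']
  symm
  refine sum_bij (fun p _ => insert (p.2, a) p.1) ?_ ?_ ?_ fun _ _ => rfl
  · rintro ⟨E, u⟩ hp
    obtain ⟨hE, hu⟩ := mem_sigma.mp hp
    obtain ⟨hua, hu⟩ := mem_sinksUpTo.mp hu
    exact insert_mem_layeredWithSources hE ha hua hu
  · rintro ⟨E, u⟩ hp ⟨E', u'⟩ hp' (heq : insert (u, a) E = insert (u', a) E')
    have hE : ∀ w, (w, a) ∉ E := hnot (mem_sigma.mp hp).1
    have hE' : ∀ w, (w, a) ∉ E' := hnot (mem_sigma.mp hp').1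
    obtain rfl : u = u' := by
      have hmem : (u, a) ∈ insert (u', a) E' := heq ▸ mem_insert_self _ _
      exact (Prod.mk.inj ((mem_insert.mp hmem).resolve_right (hE' u))).1
    obtain rfl : E = E' := by rw [← erase_insert (hE u), heq, erase_insert (hE' u)]
    rfl
  · intro E hE
    obtain ⟨hlag, hℓ, hsource⟩ := mem_layeredWithSources.mp hE
    obtain ⟨u, hua⟩ : ∃ u, (u, a) ∈ E :=
      not_forall_not.mp fun h => notMem_erase a S ((hsource a).mp h)
    refine ⟨⟨E.erase (u, a), u⟩, mem_sigma.mpr ⟨?_, ?_⟩, insert_erase hua⟩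
    · exact erase_mem_layeredWithSources hE ha hua
    · exact mem_sinksUpTo.mpr ⟨hℓ _ hua, hlag.isSink_erase hua⟩

end Layered

section LayerFactor

variable {V ι R : Type*} [Fintype V] [DecidableEq V] [LinearOrder ι] [CommSemiring R]
  {ℓ : V → ι} {S : Finset V} {a : V}

/-- The rising factorial of length `m` starting at `c i + s`, where `m` counts the vertices of
layer `i` outside `S` and `s` those of `S` in the layers up to `i`. It is the total weight of the
choices of incoming edges for the former when `S` is the set of sources. -/
def layerFactor (ℓ : V → ι) (c : ι → R) (S : Finset V) (i : ι) : R :=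
  ∏ j ∈ range #{v ∈ Sᶜ | ℓ v = i}, (c i + #{v ∈ S | ℓ v ≤ i} + j)

theorem layerFactor_erase_self (c : ι → R) (ha : a ∈ S) :
    layerFactor ℓ c (S.erase a) (ℓ a) =
      (c (ℓ a) + #{v ∈ S.erase a | ℓ v ≤ ℓ a}) * layerFactor ℓ c S (ℓ a) := by
  have hbelow : #{v ∈ S | ℓ v ≤ ℓ a} = #{v ∈ S.erase a | ℓ v ≤ ℓ a} + 1 := by
    have hamem : a ∈ {v ∈ S | ℓ v ≤ ℓ a} := mem_filter.mpr ⟨ha, le_rfl⟩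
    rw [filter_erase, card_erase_add_one hamem]
  have hlayer : #{v ∈ (S.erase a)ᶜ | ℓ v = ℓ a} = #{v ∈ Sᶜ | ℓ v = ℓ a} + 1 := by
    rw [compl_erase, filter_insert, if_pos rfl, card_insert_of_notMem (by simp [ha])]
  rw [layerFactor, layerFactor, hbelow, hlayer, prod_range_succ', mul_comm, Nat.cast_zero, add_zero]
  congr 1
  refine prod_congr rfl fun j _ => ?_
  push_cast
  ring

theorem layerFactor_erase_of_ne (c : ι → R) (hS : ∀ v ∉ S, ℓ v ≤ ℓ a) {i : ι} (hi : i ≠ ℓ a) :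
    layerFactor ℓ c (S.erase a) i = layerFactor ℓ c S i := by
  have hlayer : ({v ∈ (S.erase a)ᶜ | ℓ v = i} : Finset V) = {v ∈ Sᶜ | ℓ v = i} := by
    rw [compl_erase, filter_insert, if_neg hi.symm]
  rw [layerFactor, layerFactor, hlayer]
  rcases hi.lt_or_gt with hlt | hgt
  · have hbelow : ({v ∈ S.erase a | ℓ v ≤ i} : Finset V) = {v ∈ S | ℓ v ≤ i} := by
      have hnot : a ∉ ({v ∈ S | ℓ v ≤ i} : Finset V) := fun h => hlt.not_ge (mem_filter.mp h).2
      rw [filter_erase, erase_eq_of_notMem hnot]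
    rw [hbelow]
  · have hempty : ({v ∈ Sᶜ | ℓ v = i} : Finset V) = ∅ :=
      filter_false_of_mem fun v hv => ((hS v (mem_compl.mp hv)).trans_lt hgt).ne
    rw [hempty, card_empty, range_zero, prod_empty, prod_empty]

theorem layerFactor_eq [Fintype ι] (ℓ : V → ι) (c : ι → R) (S : Finset V) (i : ι) :
    layerFactor ℓ c S i = ∏ j ∈ range (#{v | ℓ v = i} - #{v ∈ S | ℓ v = i}),
      (c i + ∑ i' with i' ≤ i, (#{v ∈ S | ℓ v = i'} : R) + j) := by
  have hlayer : #{v ∈ Sᶜ | ℓ v = i} = #{v | ℓ v = i} - #{v ∈ S | ℓ v = i} := by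
    rw [← card_sdiff_of_subset (filter_subset_filter _ (subset_univ S))]
    congr 1
    grind [mem_compl]
  have hbelow : #{v ∈ S | ℓ v ≤ i} = ∑ i' with i' ≤ i, #{v ∈ S | ℓ v = i'} := by
    rw [sum_card_fiberwise_eq_card_filter]
    simp only [mem_filter_univ]
  rw [layerFactor, hlayer, hbelow, Nat.cast_sum]

end LayerFactor

section Weight

variable {V ι R : Type*} [Fintype V] [DecidableEq V] [Fintype ι] [LinearOrder ι] [CommSemiring R]
  {ℓ : V → ι} {S : Finset V} {a : V}

theorem sum_cycleWeight_insert (c : ι → R) {E : Finset (V × V)}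
    (hE : E ∈ layeredWithSources ℓ S) (ha : a ∈ S) (hS : ∀ v ∉ S, ℓ v ≤ ℓ a) :
    ∑ u ∈ sinksUpTo ℓ E (ℓ a), cycleWeight ℓ c (insert (u, a) E) =
      (c (ℓ a) + #{v ∈ S.erase a | ℓ v ≤ ℓ a}) * cycleWeight ℓ c E := by
  obtain ⟨hlag, hℓ, hsource⟩ := mem_layeredWithSources.mp hE
  have hsrc : IsSource E a := (hsource a).mpr ha
  have hlayer : ∀ v, Reach E a v → ℓ v = ℓ a := fun v =>
    layer_eq_of_reach hℓ fun e he => layer_snd_le hE hS he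
  obtain ⟨t, ht, hat⟩ := hlag.exists_sink_of_isSource hsrc
  have htmem : t ∈ sinksUpTo ℓ E (ℓ a) := mem_sinksUpTo.mpr ⟨(hlayer t hat).le, ht⟩
  have hopen : ∀ u ∈ (sinksUpTo ℓ E (ℓ a)).erase t,
      cycleWeight ℓ c (insert (u, a) E) = cycleWeight ℓ c E := by
    intro u hu
    obtain ⟨hut, hu⟩ := mem_erase.mp hu
    have hu : IsSink E u := (mem_sinksUpTo.mp hu).2
    exact hlag.cycleWeight_insert_of_not_reach c hu hsrc fun hau =>
      hut (hlag.sink_unique hu ht hau hat)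
  have hcard : #((sinksUpTo ℓ E (ℓ a)).erase t) =
      #{v ∈ S.erase a | ℓ v ≤ ℓ a} := by
    have hamem : a ∈ {v ∈ S | ℓ v ≤ ℓ a} := mem_filter.mpr ⟨ha, le_rfl⟩
    rw [card_erase_of_mem htmem, card_sinksUpTo hE hS, filter_erase, card_erase_of_mem hamem]
  rw [← add_sum_erase _ _ htmem, hlag.cycleWeight_insert_of_reach c ht hsrc hat hlayer,
    sum_congr rfl hopen, sum_const, hcard, nsmul_eq_mul, add_mul]

theorem sum_cycleWeight_layeredWithSources (ℓ : V → ι) (c : ι → R) (S : Finset V) :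
    ∑ E ∈ layeredWithSources ℓ S, cycleWeight ℓ c E = ∏ i, layerFactor ℓ c S i := by
  obtain ⟨T, rfl⟩ := compl_surjective S
  induction T using induction_on_max_value ℓ with
  | empty => simp [layeredWithSources_univ, cycleWeight_empty, layerFactor]
  | insert a T haT hT ih =>
    have ha : a ∈ Tᶜ := mem_compl.mpr haT
    have hmax : ∀ v ∉ Tᶜ, ℓ v ≤ ℓ a := fun v hv => hT v (notMem_compl.mp hv)
    rw [compl_insert, sum_layeredWithSources_erase _ ha,
      sum_congr rfl fun E hE => sum_cycleWeight_insert c hE ha hmax, ← mul_sum, ih]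
    exact (prod_eq_mul_prod_of_forall_ne (layerFactor_erase_self c ha) fun i hi =>
      layerFactor_erase_of_ne c hmax hi).symm

theorem sum_pa_mul_cycleWeight (ℓ : V → ι) (c : ι → R) (x : R) :
    ∑ E : Finset (V × V) with IsLaguerre E ∧ ∀ e ∈ E, ℓ e.1 ≤ ℓ e.2,
        x ^ pa E * cycleWeight ℓ c E =
      ∑ S : Finset V, x ^ #S * ∏ i, layerFactor ℓ c S i := by
  rw [← sum_fiberwise _ fun E : Finset (V × V) => ({a | IsSource E a} : Finset V)]
  refine sum_congr rfl fun S _ => ?_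
  rw [← sum_cycleWeight_layeredWithSources, mul_sum]
  refine sum_congr ?_ fun E hE => ?_
  · ext E
    simp only [mem_filter, mem_univ, true_and, mem_layeredWithSources, and_assoc, Finset.ext_iff]
  · obtain ⟨hlag, -, hsource⟩ := mem_layeredWithSources.mp hE
    rw [hlag.pa_eq_card_isSource, filter_congr fun v _ => hsource v, filter_univ_mem]

end Weight

section LayerCounts

variable {V ι : Type*} [Fintype V] [Fintype ι] [DecidableEq ι]

theorem card_filter_layerCounts_eq (ℓ : V → ι) (k : ι → ℕ) :
    #{S : Finset V | (fun i => #{v ∈ S | ℓ v = i}) = k} =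
      ∏ i, (#{v | ℓ v = i}).choose (k i) := by
  classical
  have hpi : #(Fintype.piFinset fun i => powersetCard (k i) ({v | ℓ v = i} : Finset V)) =
      ∏ i, (#{v | ℓ v = i}).choose (k i) := by
    simp only [Fintype.card_piFinset, card_powersetCard]
  rw [← hpi]
  have hsplit (f : ι → Finset V) (hf : ∀ i, f i ⊆ univ.filter (ℓ · = i)) (i : ι) :
      (univ.filter fun v => v ∈ f (ℓ v)).filter (ℓ · = i) = f i := by
    ext v
    simp only [mem_filter, mem_univ, true_and]
    constructor
    · rintro ⟨hv, rfl⟩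
      exact hv
    · intro hv
      obtain rfl := (mem_filter_univ v).mp (hf i hv)
      exact ⟨hv, rfl⟩
  refine card_nbij' (fun S i => {v ∈ S | ℓ v = i}) (fun f => univ.filter fun v => v ∈ f (ℓ v))
    ?_ ?_ ?_ ?_
  · intro S hS
    have hcard : (fun i => #{v ∈ S | ℓ v = i}) = k := (mem_filter_univ S).mp hS
    refine Fintype.mem_piFinset.mpr fun i => mem_powersetCard.mpr ⟨?_, congrFun hcard i⟩
    exact filter_subset_filter _ (subset_univ S)
  · intro f hf
    have hf (i : ι) := mem_powersetCard.mp (Fintype.mem_piFinset.mp hf i)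
    refine (mem_filter_univ _).mpr (funext fun i => ?_)
    rw [hsplit f (fun i => (hf i).1), (hf i).2]
  · intro S _
    ext v
    simp
  · intro f hf
    exact funext (hsplit f fun i => (mem_powersetCard.mp (Fintype.mem_piFinset.mp hf i)).1)

theorem sum_layerCounts {R : Type*} [CommSemiring R] (ℓ : V → ι) (g : (ι → ℕ) → R) :
    ∑ S : Finset V, g (fun i => #{v ∈ S | ℓ v = i}) =
      ∑ k ∈ Fintype.piFinset (fun i => range (#{v | ℓ v = i} + 1)),
        (∏ i, ((#{v | ℓ v = i}).choose (k i) : R)) * g k := by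
  have hmaps : ∀ S ∈ (univ : Finset (Finset V)), (fun i => #{v ∈ S | ℓ v = i}) ∈
      Fintype.piFinset (fun i => range (#{v | ℓ v = i} + 1)) := fun S _ =>
    Fintype.mem_piFinset.mpr fun i => mem_range_succ_iff.mpr <|
      card_le_card (filter_subset_filter _ (subset_univ S))
  rw [← sum_fiberwise_of_maps_to hmaps]
  refine sum_congr rfl fun k _ => ?_
  rw [sum_congr rfl fun S hS => congrArg g (mem_filter.mp hS).2, sum_const,
    card_filter_layerCounts_eq, nsmul_eq_mul, Nat.cast_prod]

end LayerCounts

end LD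

theorem multiple_laguerre_digraph_model_general {V ι R : Type*} [Fintype V] [DecidableEq V]
    [Fintype ι] [LinearOrder ι] [CommSemiring R] (ℓ : V → ι) (c : ι → R) (x : R) :
    ∑ E : Finset (V × V) with LD.IsLaguerre E ∧ ∀ e ∈ E, ℓ e.1 ≤ ℓ e.2,
        x ^ LD.pa E * ∏ i, c i ^ Set.ncard {S : Set V | LD.IsCycleSet E S ∧ ∀ v ∈ S, ℓ v = i} =
      ∑ k ∈ Fintype.piFinset (fun i => range (#{v | ℓ v = i} + 1)),
        (∏ i, (((#{v | ℓ v = i}).choose (k i) : R) *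
          ∏ j ∈ range (#{v | ℓ v = i} - k i), (c i + ∑ i' with i' ≤ i, (k i' : R) + j))) *
          x ^ ∑ i, k i := by
  refine (LD.sum_pa_mul_cycleWeight ℓ c x).trans ?_
  have hcount := LD.sum_layerCounts ℓ fun k => x ^ (∑ i, k i) *
    ∏ i, ∏ j ∈ range (#{v | ℓ v = i} - k i), (c i + ∑ i' with i' ≤ i, (k i' : R) + j)
  have hcard (S : Finset V) : ∑ i, #{v ∈ S | ℓ v = i} = #S := by
    simp only [sum_card_fiberwise_eq_card_filter, mem_univ, filter_true]
  simp only [hcard, ← LD.layerFactor_eq] at hcount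
  rw [hcount]
  refine sum_congr rfl fun k _ => ?_
  rw [prod_mul_distrib, mul_assoc, mul_comm (x ^ _)]

/-- combinatorial model for the unsigned monic multiple Laguerre
polynomials.  Summing over Laguerre digraphs `G` that are spanning subdigraphs
of the layered digraph `G_n` (edges `(i,j) → (i',j')` with `i ≤ i'`), with a
weight `x` per path component and `α_i+1` per cycle component in layer `i`:
`Σ_G x^{pa(G)} Π_i (α_i+1)^{cyc_i(G)}
   = Σ_k (Π_i C(n_i,k_i)(α_i+1+k_1+···+k_i)^{rising(n_i-k_i)}) x^{|k|}`. -/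
theorem multiple_laguerre_digraph_model (r : ℕ) (n : Fin r → ℕ) (x : ℝ) (α : Fin r → ℝ) :
    ∑ E ∈ Finset.univ.filter
        (fun E : Finset (((i : Fin r) × Fin (n i)) × ((i : Fin r) × Fin (n i))) =>
          LD.IsLaguerre E ∧ ∀ e ∈ E, e.1.1 ≤ e.2.1),
        x ^ LD.pa E *
          ∏ i, (α i + 1) ^
            Set.ncard {S : Set ((i : Fin r) × Fin (n i)) |
              LD.IsCycleSet E S ∧ ∀ v ∈ S, v.1 = i}
      = ∑ k ∈ Fintype.piFinset (fun i => Finset.range (n i + 1)),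
          (∏ i, (((n i).choose (k i) : ℝ) *
            ∏ j ∈ Finset.range (n i - k i),
              (α i + 1 + (∑ j' ∈ Finset.univ.filter (fun j' => j' ≤ i), (k j' : ℝ)) + (j : ℝ)))) *
            x ^ (∑ i, k i) := by
  have hcard (i : Fin r) : #{v : (i : Fin r) × Fin (n i) | v.1 = i} = n i := by
    rw [← Fintype.card_subtype, Fintype.card_congr (Equiv.sigmaSubtype i), Fintype.card_fin]
  simpa only [hcard] using multiple_laguerre_digraph_model_general
    (fun v : (i : Fin r) × Fin (n i) => v.1) (fun i => α i + 1) x
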